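/- arXiv:1801.07305 — 2 statements merged into one kernel-verified Lean document; each statement's English description precedes it below -/
import Mathlib

section
/- Let R ⊂ A be a Frobenius extension of rings and let M be a left A-module. Then the following three conditions are equivalent: (1) M is a Gorenstein projective left A-module; (2) the underlying left R-module M (via restriction of scalars) is Gorenstein projective; (3) both A ⊗_R M and Hom_R(A, M) are Gorenstein projective left A-modules. -/
universe u

section Frobenius

variable {R A : Type u} [Ring R] [Ring A]

/-- A ring extension `ι : R →+* A` (an injective ring homomorphism) is a Frobenius extension
if there is an `R`-`R`-bimodule homomorphism `τ : A → R` together with dual bases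
`x i`, `y i` in `A`. -/
def IsFrobeniusExtension (ι : R →+* A) : Prop :=
  Function.Injective ι ∧
  ∃ (τ : A →+ R) (n : ℕ) (x y : Fin n → A),
    (∀ (r : R) (a : A), τ (ι r * a) = r * τ a) ∧
    (∀ (a : A) (r : R), τ (a * ι r) = τ a * r) ∧
    (∀ a : A, ∑ i, x i * ι (τ (y i * a)) = a) ∧
    (∀ a : A, ∑ i, ι (τ (a * x i)) * y i = a)

/-- The extension of scalars `A ⊗_R N` of a left `R`-module `N` along `ι : R →+* A`,
realized as the quotient of the free left `A`-module on `N` by the bilinearity and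
balancing relations.  It is a left `A`-module. -/
abbrev ExtendedTensor (ι : R →+* A) (N : Type u) [AddCommGroup N] [Module R N] : Type u :=
  (N →₀ A) ⧸ Submodule.span A
    ({x : N →₀ A | ∃ n n' : N,
        x = Finsupp.single (n + n') 1 - Finsupp.single n 1 - Finsupp.single n' 1} ∪
     {x : N →₀ A | ∃ (r : R) (n : N),
        x = Finsupp.single (r • n) 1 - Finsupp.single n (ι r)})

/-- The coinduced module `Hom_R(A, N)` of a left `R`-module `N` along `ι : R →+* A`,
where `A` is a left `R`-module via `ι`.  It is a left `A`-module via `(a • f) b = f (b * a)`. -/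
abbrev CoinducedModule (ι : R →+* A) (N : Type u) [AddCommGroup N] [Module R N] : Type u :=
  @LinearMap R R _ _ (RingHom.id R) A N _ _ (Module.compHom A ι) _

noncomputable instance CoinducedModule.instModule (ι : R →+* A) (N : Type u)
    [AddCommGroup N] [Module R N] : Module A (CoinducedModule ι N) :=
  letI : Module R A := Module.compHom A ι
  { smul := fun a f =>
      { toFun := fun b => f (b * a)
        map_add' := fun b c => by
          show f ((b + c) * a) = f (b * a) + f (c * a)
          rw [add_mul]; exact map_add f _ _
        map_smul' := fun r b => by
          show f (ι r * b * a) = r • f (b * a)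
          rw [mul_assoc]
          exact map_smul f r (b * a) }
    one_smul := fun f => LinearMap.ext fun b => by show f (b * 1) = f b; rw [mul_one]
    mul_smul := fun a a' f => LinearMap.ext fun b => by
      show f (b * (a * a')) = f (b * a * a')
      rw [mul_assoc]
    smul_zero := fun a => LinearMap.ext fun b => rfl
    smul_add := fun a f g => LinearMap.ext fun b => rfl
    add_smul := fun a a' f => LinearMap.ext fun b => by
      show f (b * (a + a')) = f (b * a) + f (b * a')
      rw [mul_add, map_add]
    zero_smul := fun f => LinearMap.ext fun b => by show f (b * 0) = 0; rw [mul_zero, map_zero] }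

end Frobenius

/-- A left `R`-module `M` is Gorenstein projective if it is a syzygy of a totally acyclic
complex of projective modules: there is an acyclic complex `⋯ → P₁ → P₀ → P₋₁ → ⋯` of
projective `R`-modules which stays acyclic after applying `Hom_R(-, Q)` for every
projective `R`-module `Q`, with `M ≅ ker (P₀ → P₋₁)`. -/
def IsGorensteinProjective (R : Type u) [Ring R] (M : ModuleCat.{u} R) : Prop :=
  ∃ (P : ℤ → ModuleCat.{u} R) (f : ∀ i : ℤ, P (i + 1) →ₗ[R] P i),
    (∀ i, Module.Projective R (P i)) ∧
    (∀ i, (f i).comp (f (i + 1)) = 0) ∧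
    (∀ i, LinearMap.range (f (i + 1)) = LinearMap.ker (f i)) ∧
    (∀ Q : ModuleCat.{u} R, Module.Projective R Q →
      ∀ (i : ℤ) (g : P (i + 1) →ₗ[R] Q), g.comp (f (i + 1)) = 0 →
        ∃ h : P i →ₗ[R] Q, h.comp (f i) = g) ∧
    Nonempty (↥M ≃ₗ[R] ↥(LinearMap.ker (f (-1))))

/-!
Let `F` be a faithful functor between abelian categories with a functor `G` that is both left and
right adjoint to it. Both functors are exact and preserve projectives, hence, by adjunction, the
vanishing of `Ext` into projectives and Gorenstein projectivity. Conversely, let `F X` be Gorenstein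
projective. Then so is `G (F X)`, which embeds into a projective `P`, and the unit embeds `X` into
`P` with cokernel `L`. Since the unit splits after applying `F`, the class of Gorenstein projectives
being closed under extensions and retracts makes `F L` Gorenstein projective, so that the
construction can be iterated to resolve `X` to the right. A Frobenius system makes coinduction a
left adjoint of restriction, hence isomorphic to `A ⊗_R -`, and the above applies with `F` the
restriction and `G` the coinduction.
-/

universe v v' w w' u'

lemma exists_int_seq {α : Type*} {r : α → α → Prop} (hl : ∀ x, ∃ y, r y x)
    (hr : ∀ x, ∃ y, r x y) (x : α) (j : ℤ) :
    ∃ Z : ℤ → α, (∀ i, r (Z (i + 1)) (Z i)) ∧ Z j = x := by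
  choose l hl using hl
  choose t ht using hr
  let Z : ℤ → α
    | Int.ofNat n => l^[n] x
    | Int.negSucc n => t^[n + 1] x
  have hZ : ∀ i, r (Z (i + 1)) (Z i)
    | Int.ofNat n => by
      change r (l^[n + 1] x) (l^[n] x)
      rw [Function.iterate_succ_apply']
      exact hl _
    | Int.negSucc 0 => ht x
    | Int.negSucc (n + 1) => by
      change r (t^[n + 1] x) (t^[n + 1 + 1] x)
      rw [Function.iterate_succ_apply' t (n + 1)]
      exact ht _
  refine ⟨fun i => Z (i - j), fun i => ?_, by simp [Z]⟩
  simpa only [add_sub_right_comm] using hZ (i - j)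

section ProjectivePerp

open CategoryTheory Limits Abelian

variable {C : Type u} [Category.{v} C] [Abelian C] [HasExt.{w} C] {S : ShortComplex C}

lemma exists_f_comp_eq_of_subsingleton_ext (hS : S.ShortExact) {Q : C}
    [Subsingleton (Ext S.X₃ Q 1)] (g : S.X₁ ⟶ Q) : ∃ e : S.X₂ ⟶ Q, S.f ≫ e = g := by
  obtain ⟨x, hx⟩ := Ext.contravariant_sequence_exact₁ hS Q (Ext.mk₀ g) (n₁ := 1) rfl
    (Subsingleton.elim _ _)
  obtain ⟨e, rfl⟩ := (Ext.mk₀_bijective _ _).2 x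
  rw [Ext.mk₀_comp_mk₀] at hx
  exact ⟨e, (Ext.mk₀_bijective _ _).1 hx⟩

lemma exists_comp_f_comp_eq_of_subsingleton_ext (hS : S.ShortExact) {K P : C} {i : K ⟶ P}
    {p : P ⟶ S.X₁} {w : i ≫ p = 0} (h : (ShortComplex.mk i p w).ShortExact) {Q : C}
    [Subsingleton (Ext S.X₃ Q 1)] {g : P ⟶ Q} (hg : i ≫ g = 0) :
    ∃ e : S.X₂ ⟶ Q, (p ≫ S.f) ≫ e = g := by
  have : Epi p := h.epi_g
  obtain ⟨k, hk⟩ : ∃ k, p ≫ k = g := ⟨_, h.exact.g_desc g hg⟩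
  obtain ⟨e, rfl⟩ := exists_f_comp_eq_of_subsingleton_ext hS k
  exact ⟨e, by rw [Category.assoc, hk]⟩

lemma subsingleton_ext_one_of_exists_f_comp_eq (hS : S.ShortExact) [Projective S.X₂] {Q : C}
    (h : ∀ g : S.X₁ ⟶ Q, ∃ e : S.X₂ ⟶ Q, S.f ≫ e = g) : Subsingleton (Ext S.X₃ Q 1) := by
  refine subsingleton_of_forall_eq 0 fun x => ?_
  obtain ⟨y, rfl⟩ := Ext.contravariant_sequence_exact₃ hS Q x
    (Ext.eq_zero_of_projective _) (n₀ := 0) rfl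
  obtain ⟨g, rfl⟩ := (Ext.mk₀_bijective _ _).2 y
  obtain ⟨e, rfl⟩ := h g
  rw [← Ext.mk₀_comp_mk₀, ShortComplex.ShortExact.extClass_comp_assoc]

lemma subsingleton_ext_succ_iff_of_projective (hS : S.ShortExact) [Projective S.X₂] (Q : C)
    (n : ℕ) :
    Subsingleton (Ext S.X₃ Q (n + 2)) ↔ Subsingleton (Ext S.X₁ Q (n + 1)) := by
  refine ⟨fun _ => subsingleton_of_forall_eq 0 fun x => ?_,
    fun _ => subsingleton_of_forall_eq 0 fun x => ?_⟩
  · obtain ⟨y, rfl⟩ := Ext.contravariant_sequence_exact₁ hS Q x (n₁ := n + 2) (by omega)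
      (Subsingleton.elim _ _)
    rw [Ext.eq_zero_of_projective y, Ext.comp_zero]
  · obtain ⟨y, rfl⟩ := Ext.contravariant_sequence_exact₃ hS Q x
      (Ext.eq_zero_of_projective _) (n₀ := n + 1) (by omega)
    rw [Subsingleton.elim y 0, Ext.comp_zero]

variable (C) in
/-- The objects `X` with `Ext^i(X, Q) = 0` for all `i > 0` and all projective `Q`. -/
def projectivePerp : ObjectProperty C :=
  fun X => ∀ (Q : C) [Projective Q] (n : ℕ), Subsingleton (Ext X Q (n + 1))

instance : (projectivePerp C).IsClosedUnderExtensions where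
  prop_X₂_of_shortExact hS h₁ h₃ Q _ n := by
    refine subsingleton_of_forall_eq 0 fun x => ?_
    obtain ⟨y, rfl⟩ := Ext.contravariant_sequence_exact₂ hS Q x ((h₁ Q n).elim _ _)
    rw [(h₃ Q n).elim y 0, Ext.comp_zero]

instance : (projectivePerp C).IsStableUnderRetracts where
  of_retract {X Y} e hY Q _ n := by
    refine subsingleton_of_forall_eq 0 fun x => ?_
    rw [← Ext.mk₀_id_comp x, ← e.retract, ← Ext.mk₀_comp_mk₀_assoc,
      (hY Q n).elim ((Ext.mk₀ e.r).comp x (zero_add _)) 0, Ext.comp_zero]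

lemma projectivePerp_X₁_of_shortExact (hS : S.ShortExact) [Projective S.X₂]
    (h₃ : projectivePerp C S.X₃) : projectivePerp C S.X₁ :=
  fun Q _ n => (subsingleton_ext_succ_iff_of_projective hS Q n).1 (h₃ Q (n + 1))

lemma le_projectivePerp {𝒳 : ObjectProperty C}
    (h : ∀ X, 𝒳 X → ∃ (K P : C) (i : K ⟶ P) (p : P ⟶ X) (w : i ≫ p = 0),
      (ShortComplex.mk i p w).ShortExact ∧ Projective P ∧ 𝒳 K ∧
        ∀ (Q : C) [Projective Q] (g : K ⟶ Q), ∃ e : P ⟶ Q, i ≫ e = g) :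
    𝒳 ≤ projectivePerp C := by
  intro X hX Q _ n
  induction n generalizing X with
  | zero =>
    obtain ⟨K, P, i, p, w, hS, _, -, hQ⟩ := h X hX
    exact subsingleton_ext_one_of_exists_f_comp_eq hS (hQ Q)
  | succ n ih =>
    obtain ⟨K, P, i, p, w, hS, _, hK, -⟩ := h X hX
    exact (subsingleton_ext_succ_iff_of_projective hS Q n).2 (ih K hK)

end ProjectivePerp

section DiagramLemmas

open CategoryTheory Limits

variable {C : Type u} [Category.{v} C] [Abelian C]

lemma shortExact_of_forall_exists_g_comp {S : ShortComplex C} [Mono S.f] [Epi S.g]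
    (h : ∀ {Z : C} (k : S.X₂ ⟶ Z), S.f ≫ k = 0 → ∃ l, S.g ≫ l = k) : S.ShortExact where
  exact := S.exact_of_g_is_cokernel <| CokernelCofork.IsColimit.ofπ' _ _ fun k hk =>
    ⟨(h k hk).choose, (h k hk).choose_spec⟩

section Horseshoe

variable {S : ShortComplex C} {P₁ P₃ Y₁ Y₃ : C} {e : S.X₂ ⟶ P₁} {q₁ : P₁ ⟶ Y₁}
  {w₁ : (S.f ≫ e) ≫ q₁ = 0} {i₃ : S.X₃ ⟶ P₃} {q₃ : P₃ ⟶ Y₃} {w₃ : i₃ ≫ q₃ = 0}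

lemma exists_comp_f_eq_of_comp_biprod_lift (hS : S.ShortExact) [Mono i₃] {Z : C} {t : Z ⟶ S.X₂}
    {z : Z ⟶ P₁} (h : t ≫ biprod.lift e (S.g ≫ i₃) = z ≫ biprod.inl) :
    ∃ s : Z ⟶ S.X₁, s ≫ S.f = t ∧ s ≫ S.f ≫ e = z := by
  have := hS.mono_f
  have ht₁ : t ≫ e = z := by simpa using h =≫ biprod.fst
  have ht₃ : (t ≫ S.g) ≫ i₃ = 0 := by simpa using h =≫ biprod.snd
  obtain ⟨s, rfl⟩ : ∃ s, s ≫ S.f = t := ⟨_, hS.exact.lift_f t (zero_of_comp_mono i₃ ht₃)⟩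
  exact ⟨s, rfl, by simpa using ht₁⟩

lemma mono_biprod_lift_of_shortExact (hS : S.ShortExact) [Mono (S.f ≫ e)] [Mono i₃] :
    Mono (biprod.lift e (S.g ≫ i₃)) := by
  refine Preadditive.mono_of_cancel_zero _ fun t ht => ?_
  obtain ⟨s, rfl, hs⟩ := exists_comp_f_eq_of_comp_biprod_lift hS (ht.trans zero_comp.symm)
  rw [zero_of_comp_mono _ hs, zero_comp]

lemma exists_shortExact_cokernel_biprod_lift (hS : S.ShortExact)
    (h₁ : (ShortComplex.mk (S.f ≫ e) q₁ w₁).ShortExact)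
    (h₃ : (ShortComplex.mk i₃ q₃ w₃).ShortExact) :
    ∃ (a : Y₁ ⟶ cokernel (biprod.lift e (S.g ≫ i₃)))
      (b : cokernel (biprod.lift e (S.g ≫ i₃)) ⟶ Y₃) (w : a ≫ b = 0),
      (ShortComplex.mk a b w).ShortExact := by
  have : Mono (S.f ≫ e) := h₁.mono_f
  have : Mono i₃ := h₃.mono_f
  have : Epi q₁ := h₁.epi_g
  have : Epi q₃ := h₃.epi_g
  have : Epi S.g := hS.epi_g
  have : Mono (biprod.lift e (S.g ≫ i₃)) := mono_biprod_lift_of_shortExact hS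
  let j := biprod.lift e (S.g ≫ i₃)
  have hj : j ≫ cokernel.π j = 0 := cokernel.condition j
  obtain ⟨a, ha⟩ : ∃ a, q₁ ≫ a = biprod.inl ≫ cokernel.π j :=
    ⟨_, h₁.exact.g_desc _ (by simpa [j, biprod.lift_eq] using S.f ≫= hj)⟩
  obtain ⟨b, hb⟩ : ∃ b, cokernel.π j ≫ b = biprod.snd ≫ q₃ :=
    ⟨_, cokernel.π_desc j _ (by simp [j, w₃])⟩
  have : Mono a := by
    refine Preadditive.mono_of_cancel_zero _ fun y hy => ?_
    obtain ⟨Z, π, _, z, hz⟩ := surjective_up_to_refinements_of_epi q₁ y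
    have hzj : (z ≫ biprod.inl) ≫ cokernel.π j = 0 := by
      rw [Category.assoc, ← ha, ← reassoc_of% hz, hy, comp_zero]
    obtain ⟨s, -, rfl⟩ := exists_comp_f_eq_of_comp_biprod_lift hS
      ((ShortComplex.exact_cokernel j).lift_f _ hzj)
    rw [← cancel_epi π, hz, Category.assoc, w₁, comp_zero, comp_zero]
  have : Epi b := epi_of_epi_fac hb
  refine ⟨a, b, by simp [← cancel_epi q₁, reassoc_of% ha, hb],
    shortExact_of_forall_exists_g_comp fun k hk => ?_⟩
  have hk₁ : biprod.inl ≫ cokernel.π j ≫ k = 0 := by rw [← reassoc_of% ha, hk, comp_zero]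
  have hk₃ : i₃ ≫ biprod.inr ≫ cokernel.π j ≫ k = 0 := by
    simpa [← cancel_epi S.g, j, biprod.lift_eq, hk₁] using hj =≫ k
  obtain ⟨l, hl⟩ : ∃ l, q₃ ≫ l = biprod.inr ≫ cokernel.π j ≫ k := ⟨_, h₃.exact.g_desc _ hk₃⟩
  refine ⟨l, ?_⟩
  rw [← cancel_epi (cokernel.π j), reassoc_of% hb, hl]
  ext <;> simp [hk₁]

end Horseshoe

lemma shortExact_of_retract {T G P G' L : C} (e : Retract T G) {i : G ⟶ P} {q : P ⟶ G'}
    {w : i ≫ q = 0} (h : (ShortComplex.mk i q w).ShortExact) {c : P ⟶ L}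
    {w' : (e.i ≫ i) ≫ c = 0} (h' : (ShortComplex.mk (e.i ≫ i) c w').ShortExact) :
    ∃ (b : L ⊞ T ⟶ G') (wb : biprod.lift (i ≫ c) e.r ≫ b = 0),
      (ShortComplex.mk _ b wb).ShortExact := by
  have : Mono i := h.mono_f
  have : Epi q := h.epi_g
  have : Epi c := h'.epi_g
  obtain ⟨b, hb⟩ : ∃ b : L ⟶ G', c ≫ b = q :=
    ⟨h'.exact.desc q (by simp [w]), h'.exact.g_desc _ _⟩
  have : Epi b := epi_of_epi_fac hb
  have : Mono (biprod.lift (i ≫ c) e.r) := by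
    refine Preadditive.mono_of_cancel_zero _ fun g hg => ?_
    have hgc : (g ≫ i) ≫ c = 0 := by simpa using hg =≫ biprod.fst
    have hgr : g ≫ e.r = 0 := by simpa using hg =≫ biprod.snd
    have hgi : h'.exact.lift (g ≫ i) hgc ≫ e.i = g := by
      rw [← cancel_mono i, Category.assoc]
      exact h'.exact.lift_f (g ≫ i) hgc
    rw [← hgi] at hgr ⊢
    rw [Category.assoc, e.retract, Category.comp_id] at hgr
    rw [hgr, zero_comp]
  refine ⟨biprod.fst ≫ b, by simp [hb, w], ?_⟩
  have : Epi (biprod.fst ≫ b : L ⊞ T ⟶ G') := epi_comp _ _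
  refine shortExact_of_forall_exists_g_comp fun k hk => ?_
  simp only [biprod.lift_eq, Preadditive.add_comp, Category.assoc] at hk
  have hk₂ : biprod.inr ≫ k = 0 := by simpa [reassoc_of% w'] using e.i ≫= hk
  have hk₁ : i ≫ c ≫ biprod.inl ≫ k = 0 := by simpa [hk₂] using hk
  refine ⟨h.exact.desc (c ≫ biprod.inl ≫ k) hk₁, ?_⟩
  have : b ≫ h.exact.desc (c ≫ biprod.inl ≫ k) hk₁ = biprod.inl ≫ k := by
    rw [← cancel_epi c, reassoc_of% hb]
    exact h.exact.g_desc _ _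
  ext <;> simp [this, hk₂]

end DiagramLemmas

section GorensteinProjective

open CategoryTheory Limits Abelian

variable {C : Type u} [Category.{v} C] [Abelian C]

/-- `X` is a (first) syzygy of `Y`: there is a short exact sequence `0 ⟶ X ⟶ P ⟶ Y ⟶ 0` with `P`
projective. -/
def IsSyzygyOf (X Y : C) : Prop :=
  ∃ (P : C) (i : X ⟶ P) (p : P ⟶ Y) (w : i ≫ p = 0),
    (ShortComplex.mk i p w).ShortExact ∧ Projective P

lemma exists_isSyzygyOf [EnoughProjectives C] (X : C) :
    ∃ K, IsSyzygyOf K X :=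
  ⟨_, Projective.over X, kernel.ι (Projective.π X), _, kernel.condition _,
    { exact := ShortComplex.exact_kernel _ }, inferInstance⟩

/-- The class of syzygies of the objects of `𝒳`. -/
def syzygies (𝒳 : ObjectProperty C) : ObjectProperty C :=
  fun X => ∃ Y, IsSyzygyOf X Y ∧ 𝒳 Y

lemma syzygies_monotone : Monotone (syzygies (C := C)) := by
  rintro 𝒳 𝒴 h X ⟨Y, hXY, hY⟩
  exact ⟨Y, hXY, h Y hY⟩

variable [HasExt.{w} C]

variable (C) in
/-- The Gorenstein projective objects of an abelian category, encoded coinductively: the largest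
class of objects of `projectivePerp C` each of which embeds into a projective object with cokernel
again in the class. -/
def gorensteinProjective : ObjectProperty C :=
  OrderHom.gfp ⟨fun 𝒳 => projectivePerp C ⊓ syzygies 𝒳,
    monotone_const.inf syzygies_monotone⟩

lemma gorensteinProjective_eq :
    gorensteinProjective C = projectivePerp C ⊓ syzygies (gorensteinProjective C) :=
  (OrderHom.map_gfp _).symm

lemma le_gorensteinProjective {𝒳 : ObjectProperty C} (h : 𝒳 ≤ projectivePerp C)
    (h' : 𝒳 ≤ syzygies 𝒳) : 𝒳 ≤ gorensteinProjective C :=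
  OrderHom.le_gfp _ (le_inf h h')

lemma gorensteinProjective_le_projectivePerp : gorensteinProjective C ≤ projectivePerp C :=
  gorensteinProjective_eq.le.trans inf_le_left

lemma gorensteinProjective_le_syzygies :
    gorensteinProjective C ≤ syzygies (gorensteinProjective C) :=
  gorensteinProjective_eq.le.trans inf_le_right

lemma gorensteinProjective_X₁_of_shortExact {S : ShortComplex C} (hS : S.ShortExact)
    [hP : Projective S.X₂] (h₃ : gorensteinProjective C S.X₃) : gorensteinProjective C S.X₁ := by
  rw [gorensteinProjective_eq]
  exact ⟨projectivePerp_X₁_of_shortExact hS (gorensteinProjective_le_projectivePerp _ h₃),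
    S.X₃, ⟨S.X₂, S.f, S.g, S.zero, hS, hP⟩, h₃⟩

instance : (gorensteinProjective C).IsClosedUnderExtensions where
  prop_X₂_of_shortExact {S₀} hS₀ h₁₀ h₃₀ := by
    let 𝒳 : ObjectProperty C := fun X => ∃ (S : ShortComplex C) (_ : S.ShortExact),
      gorensteinProjective C S.X₁ ∧ gorensteinProjective C S.X₃ ∧ S.X₂ = X
    refine le_gorensteinProjective (𝒳 := 𝒳) ?_ ?_ _ ⟨S₀, hS₀, h₁₀, h₃₀, rfl⟩
    · rintro _ ⟨S, hS, h₁, h₃, rfl⟩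
      exact (projectivePerp C).prop_X₂_of_shortExact hS
        (gorensteinProjective_le_projectivePerp _ h₁) (gorensteinProjective_le_projectivePerp _ h₃)
    · rintro _ ⟨S, hS, h₁, h₃, rfl⟩
      obtain ⟨Y₁, ⟨P₁, i₁, q₁, w₁, hS₁, _⟩, hY₁⟩ := gorensteinProjective_le_syzygies _ h₁
      obtain ⟨Y₃, ⟨P₃, i₃, q₃, w₃, hS₃, _⟩, hY₃⟩ := gorensteinProjective_le_syzygies _ h₃
      have : Subsingleton (Ext S.X₃ P₁ 1) := gorensteinProjective_le_projectivePerp _ h₃ P₁ 0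
      obtain ⟨e, rfl⟩ := exists_f_comp_eq_of_subsingleton_ext hS i₁
      obtain ⟨a, b, w, hab⟩ := exists_shortExact_cokernel_biprod_lift hS hS₁ hS₃
      have := hS₁.mono_f
      have := hS₃.mono_f
      have : Mono (biprod.lift e (S.g ≫ i₃)) := mono_biprod_lift_of_shortExact hS
      exact ⟨_, ⟨P₁ ⊞ P₃, _, _, cokernel.condition _,
        { exact := ShortComplex.exact_cokernel _ }, inferInstance⟩, _, hab, hY₁, hY₃, rfl⟩

lemma gorensteinProjective_biprod_of_retract {T G P G' L : C} (e : Retract T G) {i : G ⟶ P}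
    {q : P ⟶ G'} {w : i ≫ q = 0} (h : (ShortComplex.mk i q w).ShortExact) {c : P ⟶ L}
    {w' : (e.i ≫ i) ≫ c = 0} (h' : (ShortComplex.mk (e.i ≫ i) c w').ShortExact)
    (hG : gorensteinProjective C G) (hG' : gorensteinProjective C G') :
    gorensteinProjective C (L ⊞ T) := by
  obtain ⟨b, wb, hb⟩ := shortExact_of_retract e h h'
  exact (gorensteinProjective C).prop_X₂_of_shortExact hb hG hG'

instance : (gorensteinProjective C).IsStableUnderRetracts where
  of_retract {T₀ G₀} e₀ h₀ := by
    refine le_gorensteinProjective (𝒳 := (gorensteinProjective C).retractClosure) ?_ ?_ _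
      ⟨G₀, h₀, ⟨e₀⟩⟩
    · rw [ObjectProperty.retractClosure_le_iff]
      exact gorensteinProjective_le_projectivePerp
    · rintro T ⟨G, hG, ⟨e⟩⟩
      obtain ⟨G', ⟨P, i, q, w, hS, hP⟩, hG'⟩ := gorensteinProjective_le_syzygies _ hG
      have := hS.mono_f
      have hL : (ShortComplex.mk (e.i ≫ i) _ (cokernel.condition _)).ShortExact :=
        { exact := ShortComplex.exact_cokernel _ }
      exact ⟨_, ⟨P, _, _, _, hL, hP⟩, _,
        gorensteinProjective_biprod_of_retract e hS hL hG hG',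
        ⟨⟨biprod.inl, biprod.fst, by simp⟩⟩⟩

lemma gorensteinProjective_cokernel_of_retract {T G P G' L : C} (e : Retract T G) {i : G ⟶ P}
    {q : P ⟶ G'} {w : i ≫ q = 0} (h : (ShortComplex.mk i q w).ShortExact) {c : P ⟶ L}
    {w' : (e.i ≫ i) ≫ c = 0} (h' : (ShortComplex.mk (e.i ≫ i) c w').ShortExact)
    (hG : gorensteinProjective C G) (hG' : gorensteinProjective C G') :
    gorensteinProjective C L :=
  (gorensteinProjective C).prop_of_retract ⟨biprod.inl, biprod.fst, by simp⟩
    (gorensteinProjective_biprod_of_retract e h h' hG hG')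

lemma gorensteinProjective_of_int_seq {Z P : ℤ → C} {i : ∀ n, Z (n + 1) ⟶ P n}
    {p : ∀ n, P n ⟶ Z n} {w : ∀ n, i n ≫ p n = 0}
    (h : ∀ n, (ShortComplex.mk (i n) (p n) (w n)).ShortExact) (hP : ∀ n, Projective (P n))
    (hQ : ∀ (Q : C) [Projective Q] (n : ℤ) (g : Z (n + 1) ⟶ Q), ∃ e : P n ⟶ Q, i n ≫ e = g)
    (n : ℤ) : gorensteinProjective C (Z n) := by
  refine le_gorensteinProjective (𝒳 := .ofObj Z) (le_projectivePerp ?_) ?_ _ ⟨n⟩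
  · rintro _ ⟨n⟩
    exact ⟨_, _, _, _, _, h n, hP n, ⟨n + 1⟩, fun Q _ => hQ Q n⟩
  · rintro _ ⟨n⟩
    obtain ⟨n, rfl⟩ : ∃ m, n = m + 1 := ⟨n - 1, by simp⟩
    exact ⟨_, ⟨_, _, _, _, h n, hP n⟩, ⟨n⟩⟩

lemma exists_int_seq_of_gorensteinProjective [EnoughProjectives C] {X : C}
    (hX : gorensteinProjective C X) (j : ℤ) :
    ∃ Z : ℤ → C, (∀ n, gorensteinProjective C (Z n)) ∧ (∀ n, IsSyzygyOf (Z (n + 1)) (Z n)) ∧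
      Z j = X := by
  let r (K L : (gorensteinProjective C).FullSubcategory) : Prop := IsSyzygyOf K.obj L.obj
  have hl (Y) : ∃ K, r K Y := by
    obtain ⟨K, P, i, p, w, hS, hP⟩ := exists_isSyzygyOf Y.obj
    exact ⟨⟨K, gorensteinProjective_X₁_of_shortExact hS Y.property⟩, P, i, p, w, hS, hP⟩
  have hr (Y) : ∃ L, r Y L := by
    obtain ⟨L, hYL, hL⟩ := gorensteinProjective_le_syzygies _ Y.property
    exact ⟨⟨L, hL⟩, hYL⟩
  obtain ⟨Z, hZ, hj⟩ := exists_int_seq hl hr ⟨X, hX⟩ j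
  exact ⟨fun n => (Z n).obj, fun n => (Z n).property, hZ, congrArg _ hj⟩

end GorensteinProjective

section FrobeniusFunctor

open CategoryTheory Limits Abelian

variable {C : Type u} [Category.{v} C] {D : Type u'} [Category.{v'} D] {F : C ⥤ D} {G : D ⥤ C}

lemma projective_obj_of_adjunction (adj₁ : F ⊣ G) (adj₂ : G ⊣ F) (P : C) [hP : Projective P] :
    Projective (F.obj P) :=
  have := adj₂.leftAdjoint_preservesColimits
  adj₁.map_projective P hP

lemma forall_exists_map_comp_eq_iff (adj : F ⊣ G) {X Y : C} (f : X ⟶ Y) (Q : D) :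
    (∀ g : F.obj X ⟶ Q, ∃ e, F.map f ≫ e = g) ↔ ∀ g : X ⟶ G.obj Q, ∃ e, f ≫ e = g := by
  simp only [(adj.homEquiv X Q).symm.forall_congr_left, (adj.homEquiv Y Q).symm.exists_congr_left,
    Equiv.symm_symm, ← adj.homEquiv_naturality_left, EmbeddingLike.apply_eq_iff_eq]

variable [Abelian C] [Abelian D]

lemma shortExact_map_of_adjunction (adj₁ : F ⊣ G) (adj₂ : G ⊣ F) {X₁ X₂ X₃ : C} {f : X₁ ⟶ X₂}
    {g : X₂ ⟶ X₃} {w : f ≫ g = 0} (h : (ShortComplex.mk f g w).ShortExact) :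
    ∃ w', (ShortComplex.mk (F.map f) (F.map g) w').ShortExact := by
  have := adj₁.leftAdjoint_preservesColimits
  have := adj₂.rightAdjoint_preservesLimits
  have := adj₁.isLeftAdjoint
  have := F.preservesZeroMorphisms_of_isLeftAdjoint
  exact ⟨_, h.map_of_exact F⟩

variable [HasExt.{w} C] [HasExt.{w'} D] [EnoughProjectives C]

lemma projectivePerp_obj_of_adjunction (adj₁ : F ⊣ G) (adj₂ : G ⊣ F) {X : C}
    (hX : projectivePerp C X) : projectivePerp D (F.obj X) := by
  refine le_projectivePerp (𝒳 := (projectivePerp C).strictMap F) ?_ _ ⟨X, hX⟩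
  rintro _ ⟨X, hX⟩
  obtain ⟨K, P, i, p, w, hS, _⟩ := exists_isSyzygyOf X
  obtain ⟨w', hFS⟩ := shortExact_map_of_adjunction adj₁ adj₂ hS
  refine ⟨_, _, _, _, w', hFS, projective_obj_of_adjunction adj₁ adj₂ _,
    ⟨K, projectivePerp_X₁_of_shortExact hS hX⟩, fun Q _ => ?_⟩
  have := projective_obj_of_adjunction adj₂ adj₁ Q
  have := hX (G.obj Q) 0
  exact (forall_exists_map_comp_eq_iff adj₁ i Q).2 (exists_f_comp_eq_of_subsingleton_ext hS)

lemma gorensteinProjective_obj_of_adjunction (adj₁ : F ⊣ G) (adj₂ : G ⊣ F)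
    {X : C} (hX : gorensteinProjective C X) : gorensteinProjective D (F.obj X) := by
  refine le_gorensteinProjective (𝒳 := (gorensteinProjective C).strictMap F) ?_ ?_ _ ⟨X, hX⟩
  · rintro _ ⟨X, hX⟩
    exact projectivePerp_obj_of_adjunction adj₁ adj₂ (gorensteinProjective_le_projectivePerp _ hX)
  · rintro _ ⟨X, hX⟩
    obtain ⟨Y, ⟨P, i, p, w, hS, _⟩, hY⟩ := gorensteinProjective_le_syzygies _ hX
    obtain ⟨w', hFS⟩ := shortExact_map_of_adjunction adj₁ adj₂ hS
    exact ⟨_, ⟨_, _, _, w', hFS, projective_obj_of_adjunction adj₁ adj₂ P⟩, _, hY⟩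

variable [F.Faithful]

lemma projectivePerp_of_obj_of_adjunction (adj₁ : F ⊣ G) (adj₂ : G ⊣ F)
    {X : C} (hX : projectivePerp D (F.obj X)) : projectivePerp C X := by
  refine le_projectivePerp (𝒳 := (projectivePerp D).inverseImage F) (fun X hX => ?_) _ hX
  obtain ⟨K, P, i, p, w, hS, hP⟩ := exists_isSyzygyOf X
  obtain ⟨w', hFS⟩ := shortExact_map_of_adjunction adj₁ adj₂ hS
  have : Projective (F.obj P) := projective_obj_of_adjunction adj₁ adj₂ P
  refine ⟨K, P, i, p, w, hS, hP, projectivePerp_X₁_of_shortExact hFS hX, fun Q _ g => ?_⟩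
  have := projective_obj_of_adjunction adj₁ adj₂ Q
  have := hX (F.obj Q) 0
  let s : Q ⟶ G.obj (F.obj Q) := Projective.factorThru (𝟙 Q) (adj₂.counit.app Q)
  obtain ⟨e, he⟩ := (forall_exists_map_comp_eq_iff adj₁ i (F.obj Q)).1
    (exists_f_comp_eq_of_subsingleton_ext hFS) (g ≫ s)
  exact ⟨e ≫ adj₂.counit.app Q, by simp [reassoc_of% he, s]⟩

lemma gorensteinProjective_of_obj_of_adjunction [EnoughProjectives D]
    (adj₁ : F ⊣ G) (adj₂ : G ⊣ F)
    {X : C} (hX : gorensteinProjective D (F.obj X)) : gorensteinProjective C X := by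
  refine le_gorensteinProjective (𝒳 := (gorensteinProjective D).inverseImage F) (fun X hX => ?_)
    (fun X hX => ?_) _ hX
  · exact projectivePerp_of_obj_of_adjunction adj₁ adj₂
      (gorensteinProjective_le_projectivePerp _ hX)
  · obtain ⟨Y, ⟨P, i, p, w, hS, _⟩, hY⟩ := gorensteinProjective_le_syzygies _
      (gorensteinProjective_obj_of_adjunction adj₂ adj₁ hX)
    have := hS.mono_f
    let η := adj₁.unit.app X
    have : Mono (η ≫ i) := inferInstance
    have hT : (ShortComplex.mk (η ≫ i) _ (cokernel.condition _)).ShortExact :=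
      { exact := ShortComplex.exact_cokernel _ }
    obtain ⟨w₁, hFS⟩ := shortExact_map_of_adjunction adj₁ adj₂ hS
    obtain ⟨w₂, hFT⟩ := shortExact_map_of_adjunction adj₁ adj₂ hT
    simp only [F.map_comp] at w₂ hFT
    let e : Retract (F.obj X) (F.obj (G.obj (F.obj X))) :=
      ⟨F.map η, adj₁.counit.app _, adj₁.left_triangle_components X⟩
    exact ⟨_, ⟨P, _, _, _, hT, inferInstance⟩,
      gorensteinProjective_cokernel_of_retract e hFS hFT
        (gorensteinProjective_obj_of_adjunction adj₁ adj₂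
          (gorensteinProjective_obj_of_adjunction adj₂ adj₁ hX))
        (gorensteinProjective_obj_of_adjunction adj₁ adj₂ hY)⟩

theorem gorensteinProjective_iff_of_adjunction [EnoughProjectives D]
    (adj₁ : F ⊣ G) (adj₂ : G ⊣ F) (X : C) :
    gorensteinProjective C X ↔ gorensteinProjective D (F.obj X) :=
  ⟨gorensteinProjective_obj_of_adjunction adj₁ adj₂,
    gorensteinProjective_of_obj_of_adjunction adj₁ adj₂⟩

theorem gorensteinProjective_obj_obj_iff_of_adjunction [EnoughProjectives D] (adj₁ : F ⊣ G)
    (adj₂ : G ⊣ F) (X : C) :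
    gorensteinProjective C (G.obj (F.obj X)) ↔ gorensteinProjective C X := by
  refine ⟨fun h => gorensteinProjective_of_obj_of_adjunction adj₁ adj₂ ?_, fun h =>
    gorensteinProjective_obj_of_adjunction adj₂ adj₁
      (gorensteinProjective_obj_of_adjunction adj₁ adj₂ h)⟩
  exact (gorensteinProjective D).prop_of_retract
    ⟨F.map (adj₁.unit.app X), adj₁.counit.app _, adj₁.left_triangle_components X⟩
    (gorensteinProjective_obj_of_adjunction adj₁ adj₂ h)

end FrobeniusFunctor

section ModuleCat

open CategoryTheory Limits

variable {R : Type u} [Ring R]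

lemma gorensteinProjective_of_isGorensteinProjective {M : ModuleCat.{u} R}
    (h : IsGorensteinProjective R M) : gorensteinProjective (ModuleCat.{u} R) M := by
  obtain ⟨P, f, hP, hff, hexact, hQ, ⟨e⟩⟩ := h
  let p (n : ℤ) : P (n + 1 + 1) →ₗ[R] LinearMap.ker (f n) :=
    (f (n + 1)).codRestrict _ fun x => LinearMap.congr_fun (hff n) x
  have hp (n : ℤ) : Function.Surjective (p n) := by
    rintro ⟨x, hx⟩
    obtain ⟨y, rfl⟩ := (hexact n).ge hx
    exact ⟨y, rfl⟩
  have hfp (n : ℤ) : Function.Exact (LinearMap.ker (f (n + 1))).subtype (p n) := by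
    rw [LinearMap.exact_iff, Submodule.range_subtype]
    exact LinearMap.ker_codRestrict ..
  have hpf (n : ℤ) : p n ∘ₗ f (n + 1 + 1) = 0 :=
    LinearMap.ext fun x => Subtype.ext (LinearMap.congr_fun (hff (n + 1)) x)
  have hker : gorensteinProjective (ModuleCat.{u} R) (.of R (LinearMap.ker (f (-1)))) := by
    refine gorensteinProjective_of_int_seq (Z := fun n => .of R (LinearMap.ker (f n)))
      (i := fun n => ModuleCat.ofHom (Submodule.subtype _)) (p := fun n => ModuleCat.ofHom (p n))
      (w := fun n => ModuleCat.hom_ext (hfp n).linearMap_comp_eq_zero)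
      (fun n => ModuleCat.shortComplex_shortExact _ (hfp n) Subtype.val_injective (hp n))
      (fun n => (IsProjective.iff_projective _).1 (hP _)) (fun Q hQ' n g => ?_) (-1)
    obtain ⟨h, hh⟩ := hQ Q ((IsProjective.iff_projective _).2 hQ') (n + 1 + 1)
      (g.hom ∘ₗ p (n + 1)) (by rw [LinearMap.comp_assoc, hpf, LinearMap.comp_zero])
    refine ⟨ModuleCat.ofHom h, ?_⟩
    ext x
    obtain ⟨y, rfl⟩ := hp (n + 1) x
    exact LinearMap.congr_fun hh y
  exact (gorensteinProjective _).prop_of_iso e.symm.toModuleIso hker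

lemma isGorensteinProjective_of_gorensteinProjective {M : ModuleCat.{u} R}
    (hM : gorensteinProjective (ModuleCat.{u} R) M) : IsGorensteinProjective R M := by
  obtain ⟨Z, hZ, hZZ, rfl⟩ := exists_int_seq_of_gorensteinProjective hM 1
  choose P i p w hS hP using hZZ
  have hi (n : ℤ) : Function.Injective (i n) := (hS n).moduleCat_injective_f
  have hp (n : ℤ) : Function.Surjective (p n) := (hS n).moduleCat_surjective_g
  have hip (n : ℤ) : LinearMap.ker (p n).hom = LinearMap.range (i n).hom :=
    LinearMap.exact_iff.1 <|
      (ShortComplex.ShortExact.moduleCat_exact_iff_function_exact _).1 (hS n).exact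
  have hker (n : ℤ) : LinearMap.ker (p (n + 1) ≫ i n).hom = LinearMap.range (i (n + 1)).hom := by
    rw [ModuleCat.hom_comp, LinearMap.ker_comp_of_ker_eq_bot _ (LinearMap.ker_eq_bot.2 (hi n)), hip]
  have hrange (n : ℤ) : LinearMap.range (p (n + 1) ≫ i n).hom = LinearMap.range (i n).hom := by
    rw [ModuleCat.hom_comp, LinearMap.range_comp, LinearMap.range_eq_top.2 (hp _),
      Submodule.map_top]
  refine ⟨P, fun n => (p (n + 1) ≫ i n).hom, fun n => (IsProjective.iff_projective _).2 (hP n),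
    fun n => ?_, fun n => (hrange _).trans (hker n).symm, fun Q hQ n g hg => ?_, ⟨?_⟩⟩
  · rw [← ModuleCat.hom_comp]
    simp [reassoc_of% w]
  · have hQ' : Projective Q := (IsProjective.iff_projective _).1 hQ
    have : Epi (p (n + 1 + 1)) := (hS _).epi_g
    have hg' : i (n + 1) ≫ ModuleCat.ofHom g = 0 := by
      rw [← cancel_epi (p (n + 1 + 1)), comp_zero, ← Category.assoc]
      exact ModuleCat.hom_ext hg
    have := gorensteinProjective_le_projectivePerp _ (hZ n) Q 0
    obtain ⟨e, he⟩ := exists_comp_f_comp_eq_of_subsingleton_ext (hS n) (hS (n + 1)) hg'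
    exact ⟨e.hom, congrArg ModuleCat.Hom.hom he⟩
  · exact (LinearEquiv.ofInjective _ (hi (-1 + 1))).trans (LinearEquiv.ofEq _ _ (hker (-1)).symm)

theorem isGorensteinProjective_iff_gorensteinProjective {M : ModuleCat.{u} R} :
    IsGorensteinProjective R M ↔ gorensteinProjective (ModuleCat.{u} R) M :=
  ⟨gorensteinProjective_of_isGorensteinProjective, isGorensteinProjective_of_gorensteinProjective⟩

end ModuleCat

section ScalarExtension

variable {R A : Type u} [Ring R] [Ring A] {ι : R →+* A} {N X Y : Type u} [AddCommGroup N]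
  [Module R N] [AddCommGroup X] [Module A X] [AddCommGroup Y] [Module A Y]

/-- A semilinear map `φ : N → X` exhibits the `A`-module `X` as the extension of scalars
`A ⊗_R N` if it is universal among the `ι`-semilinear maps from `N` to `A`-modules. -/
def IsScalarExtension (φ : N →ₛₗ[ι] X) : Prop :=
  ∀ (M : Type u) [AddCommGroup M] [Module A M],
    Function.Bijective fun h : X →ₗ[A] M => h.comp φ

lemma IsScalarExtension.nonempty_linearEquiv {φ : N →ₛₗ[ι] X} {ψ : N →ₛₗ[ι] Y}
    (hφ : IsScalarExtension φ) (hψ : IsScalarExtension ψ) : Nonempty (X ≃ₗ[A] Y) := by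
  obtain ⟨f, hf⟩ := (hφ Y).2 ψ
  obtain ⟨g, hg⟩ := (hψ X).2 φ
  dsimp only at hf hg
  exact ⟨.ofLinearMap f g ((hψ Y).1 (by simp [LinearMap.comp_assoc, hf, hg]))
    ((hφ X).1 (by simp [LinearMap.comp_assoc, hf, hg]))⟩

namespace ExtendedTensor

/-- The universal semilinear map `n ↦ 1 ⊗ n`. -/
noncomputable def mk (ι : R →+* A) (N : Type u) [AddCommGroup N] [Module R N] :
    N →ₛₗ[ι] ExtendedTensor ι N where
  toFun n := Submodule.Quotient.mk (Finsupp.single n 1)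
  map_add' n n' := by
    rw [← Submodule.Quotient.mk_add, Submodule.Quotient.eq, ← sub_sub]
    exact Submodule.subset_span (.inl ⟨n, n', rfl⟩)
  map_smul' r n := by
    rw [← Submodule.Quotient.mk_smul, Finsupp.smul_single_one, Submodule.Quotient.eq]
    exact Submodule.subset_span (.inr ⟨r, n, rfl⟩)

/-- The `A`-linear map `a ⊗ n ↦ a • g n` induced by a semilinear map `g`. -/
noncomputable def lift (g : N →ₛₗ[ι] X) : ExtendedTensor ι N →ₗ[A] X :=
  Submodule.liftQ _ (Finsupp.linearCombination A g) <| by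
    rw [Submodule.span_le]
    rintro _ (⟨n, n', rfl⟩ | ⟨r, n, rfl⟩) <;> simp [LinearMap.mem_ker]

lemma isScalarExtension_mk : IsScalarExtension (mk ι N) := by
  refine fun M _ _ => ⟨fun f g h => ?_, fun g => ⟨lift g, ?_⟩⟩
  · ext n
    exact LinearMap.congr_fun h n
  · ext n
    simp [mk, lift]

end ExtendedTensor

end ScalarExtension

section FrobeniusSystem

/-- A Frobenius system for a ring homomorphism `ι : R →+* A`: a homomorphism of
`R`-`R`-bimodules `τ : A → R` together with dual bases `x` and `y`. -/
structure FrobeniusSystem {R A : Type*} [Ring R] [Ring A] (ι : R →+* A) (κ : Type*)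
    [Fintype κ] where
  τ : A →+ R
  x : κ → A
  y : κ → A
  τ_map_mul (r : R) (a : A) : τ (ι r * a) = r * τ a
  τ_mul_map (a : A) (r : R) : τ (a * ι r) = τ a * r
  sum_x_mul (a : A) : ∑ i, x i * ι (τ (y i * a)) = a
  sum_mul_y (a : A) : ∑ i, ι (τ (a * x i)) * y i = a

variable {R A : Type u} [Ring R] [Ring A] {ι : R →+* A} {κ : Type*} [Fintype κ] {N M : Type u}
  [AddCommGroup N] [Module R N] [AddCommGroup M] [Module A M]

lemma CoinducedModule.apply_map_mul (f : CoinducedModule ι N) (r : R) (a : A) :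
    f (ι r * a) = r • f a :=
  let := Module.compHom A ι
  f.map_smul r a

namespace FrobeniusSystem

variable (𝓕 : FrobeniusSystem ι κ)

lemma sum_τ_smul_apply (f : CoinducedModule ι N) (a : A) :
    ∑ i, 𝓕.τ (a * 𝓕.x i) • f (𝓕.y i) = f a := by
  simp_rw [← CoinducedModule.apply_map_mul, ← map_sum, 𝓕.sum_mul_y]

/-- The semilinear map `n ↦ (a ↦ τ a • n)`, which makes the coinduced module an extension of
scalars. -/
noncomputable def toCoinduced (N : Type u) [AddCommGroup N] [Module R N] :
    N →ₛₗ[ι] CoinducedModule ι N where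
  toFun n := letI := Module.compHom A ι
    { toFun a := 𝓕.τ a • n
      map_add' a b := by rw [map_add, add_smul]
      map_smul' r a := (congr($(𝓕.τ_map_mul r a) • n)).trans (mul_smul ..) }
  map_add' n n' := DFunLike.ext _ _ fun a => smul_add _ _ _
  map_smul' r n := DFunLike.ext _ _ fun a =>
    (mul_smul (𝓕.τ a) r n).symm.trans congr($((𝓕.τ_mul_map a r).symm) • n)

lemma sum_x_smul_toCoinduced (f : CoinducedModule ι N) :
    ∑ i, 𝓕.x i • 𝓕.toCoinduced N (f (𝓕.y i)) = f := by
  let := Module.compHom A ι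
  refine LinearMap.ext fun a => ?_
  rw [LinearMap.sum_apply]
  exact 𝓕.sum_τ_smul_apply f a

/-- The `A`-linear map `f ↦ ∑ i, x i • g (f (y i))` induced by a semilinear map `g`. -/
noncomputable def coinducedLift (g : N →ₛₗ[ι] M) : CoinducedModule ι N →ₗ[A] M where
  toFun f := ∑ i, 𝓕.x i • g (f (𝓕.y i))
  map_add' f f' := by
    simp only [LinearMap.add_apply, map_add, smul_add, Finset.sum_add_distrib]
  map_smul' a f := by
    calc ∑ i, 𝓕.x i • g (f (𝓕.y i * a))
      _ = ∑ i, ∑ j, (𝓕.x i * ι (𝓕.τ (𝓕.y i * (a * 𝓕.x j)))) • g (f (𝓕.y j)) := by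
        refine Finset.sum_congr rfl fun i _ => ?_
        rw [← 𝓕.sum_τ_smul_apply, map_sum, Finset.smul_sum]
        simp only [map_smulₛₗ, mul_smul, mul_assoc]
      _ = ∑ j, (a * 𝓕.x j) • g (f (𝓕.y j)) := by
        rw [Finset.sum_comm]
        simp only [← Finset.sum_smul, 𝓕.sum_x_mul]
      _ = a • ∑ j, 𝓕.x j • g (f (𝓕.y j)) := by
        simp only [mul_smul, Finset.smul_sum]

lemma coinducedLift_toCoinduced (g : N →ₛₗ[ι] M) (n : N) :
    𝓕.coinducedLift g (𝓕.toCoinduced N n) = g n := by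
  change ∑ i, 𝓕.x i • g (𝓕.τ (𝓕.y i) • n) = g n
  simpa [← mul_smul, ← Finset.sum_smul] using congr($(𝓕.sum_x_mul 1) • g n)

lemma isScalarExtension_toCoinduced : IsScalarExtension (𝓕.toCoinduced N) := by
  refine fun M _ _ => ⟨fun f g h => ?_, fun g => ⟨𝓕.coinducedLift g, ?_⟩⟩
  · refine LinearMap.ext fun x => ?_
    rw [← 𝓕.sum_x_smul_toCoinduced x, map_sum, map_sum]
    simp only [map_smul]
    exact Finset.sum_congr rfl fun i _ => congr(𝓕.x i • $(LinearMap.congr_fun h _))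
  · ext n
    exact 𝓕.coinducedLift_toCoinduced g n

open CategoryTheory ModuleCat

/-- The bijection `Hom_A(Hom_R(A, N), M) ≃ Hom_R(N, M)` given by composition with `toCoinduced`. -/
noncomputable def coextendScalarsHomEquiv (N : ModuleCat.{u} R) (M : ModuleCat.{u} A) :
    ((coextendScalars ι).obj N ⟶ M) ≃ (N ⟶ (restrictScalars ι).obj M) :=
  ModuleCat.homEquiv.trans <| (Equiv.ofBijective _ (𝓕.isScalarExtension_toCoinduced M)).trans
    (semilinearMapAddEquiv ι N M).toEquiv

lemma coextendScalarsHomEquiv_map_comp {N N' : ModuleCat.{u} R} {M : ModuleCat.{u} A}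
    (f : N' ⟶ N) (h : (coextendScalars ι).obj N ⟶ M) :
    𝓕.coextendScalarsHomEquiv N' M ((coextendScalars ι).map f ≫ h) =
      f ≫ 𝓕.coextendScalarsHomEquiv N M h := by
  have (n : N') : (coextendScalars ι).map f (𝓕.toCoinduced N' n) = 𝓕.toCoinduced N (f n) :=
    let := Module.compHom A ι
    LinearMap.ext fun a => f.hom.map_smul (𝓕.τ a) n
  ext n
  exact congrArg h (this n)

/-- Coinduction along a ring homomorphism with a Frobenius system is also left adjoint to
restriction. -/
noncomputable def coextendScalarsAdj : coextendScalars.{u} ι ⊣ restrictScalars ι :=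
  .mkOfHomEquiv
    { homEquiv := 𝓕.coextendScalarsHomEquiv
      homEquiv_naturality_left_symm f g := by
        rw [Equiv.symm_apply_eq, coextendScalarsHomEquiv_map_comp, Equiv.apply_symm_apply]
      homEquiv_naturality_right _ _ := rfl }

end FrobeniusSystem

end FrobeniusSystem

section Statement

variable {R A : Type u} [Ring R] [Ring A]

theorem stmt0_general {ι : R →+* A} {κ : Type*} [Fintype κ] (𝓕 : FrobeniusSystem ι κ)
    (M : Type u) [AddCommGroup M] [Module A M] :
    (IsGorensteinProjective A (ModuleCat.of A M) ↔
      IsGorensteinProjective R (@ModuleCat.of R _ M _ (Module.compHom M ι))) ∧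
    (IsGorensteinProjective R (@ModuleCat.of R _ M _ (Module.compHom M ι)) ↔
      (IsGorensteinProjective A
          (ModuleCat.of A (@ExtendedTensor R A _ _ ι M _ (Module.compHom M ι))) ∧
        IsGorensteinProjective A
          (ModuleCat.of A (@CoinducedModule R A _ _ ι M _ (Module.compHom M ι))))) := by
  let := Module.compHom M ι
  let adj₁ := ModuleCat.restrictCoextendScalarsAdj.{u} ι
  let adj₂ := 𝓕.coextendScalarsAdj
  simp only [isGorensteinProjective_iff_gorensteinProjective]
  have hres : gorensteinProjective _ (ModuleCat.of A M) ↔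
      gorensteinProjective _ (ModuleCat.of R M) :=
    gorensteinProjective_iff_of_adjunction adj₁ adj₂ _
  have hcoind : gorensteinProjective _ (ModuleCat.of A (CoinducedModule ι M)) ↔
      gorensteinProjective _ (ModuleCat.of A M) :=
    gorensteinProjective_obj_obj_iff_of_adjunction adj₁ adj₂ (.of A M)
  obtain ⟨e⟩ := ExtendedTensor.isScalarExtension_mk.nonempty_linearEquiv
    (𝓕.isScalarExtension_toCoinduced (N := M))
  have htensor := (gorensteinProjective (ModuleCat.{u} A)).prop_iff_of_iso e.toModuleIso
  rw [htensor, and_self, hcoind, ← hres, and_self]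

theorem stmt0 (ι : R →+* A) (hF : IsFrobeniusExtension ι)
    (M : Type u) [AddCommGroup M] [Module A M] :
    (IsGorensteinProjective A (ModuleCat.of A M) ↔
      IsGorensteinProjective R (@ModuleCat.of R _ M _ (Module.compHom M ι))) ∧
    (IsGorensteinProjective R (@ModuleCat.of R _ M _ (Module.compHom M ι)) ↔
      (IsGorensteinProjective A
          (ModuleCat.of A (@ExtendedTensor R A _ _ ι M _ (Module.compHom M ι))) ∧
        IsGorensteinProjective A
          (ModuleCat.of A (@CoinducedModule R A _ _ ι M _ (Module.compHom M ι))))) := by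
  obtain ⟨-, τ, n, x, y, h₁, h₂, h₃, h₄⟩ := hF
  exact stmt0_general ⟨τ, x, y, h₁, h₂, h₃, h₄⟩ M

end Statement
end

section
/- Let R ⊂ A be a Frobenius extension of rings and let M be a left A-module. If M is a Gorenstein projective left A-module, then the underlying left R-module M (via restriction of scalars) is Gorenstein projective. -/
/-!
A Frobenius system `(τ, xᵢ, yᵢ)` for `ι : R →+* A` makes coinduction `Q ↦ Hom_R(A, Q)`, which is
always right adjoint to restriction of scalars, left adjoint to it as well: the unit is
`q ↦ τ(-) q` and the counit is `φ ↦ ∑ i, xᵢ φ(yᵢ)`. If `F ⊣ G ⊣ F`, then `F` and `G` preserve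
epimorphisms, so both preserve projectives, and `F` is exact. Hence `F` carries an acyclic complex
`P` of projectives to another one, and `Hom(F P, Q) ≅ Hom(P, G Q)` is acyclic for projective `Q`
when `P` is totally acyclic, because `G Q` is projective.
-/

universe u

section Statement

variable {R A : Type u} [Ring R] [Ring A]

universe v w v' w'

open CategoryTheory Limits

section Adjunction

variable {C D : Type*} [Category* C] [Category* D] [HasZeroMorphisms C] [HasZeroMorphisms D]
  {F : C ⥤ D} {G : D ⥤ C}

theorem exists_map_comp_eq_of_adjunction [G.PreservesZeroMorphisms] (adj : F ⊣ G) {X Y Z : C}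
    {d' : X ⟶ Y} {d : Y ⟶ Z} {Q : D}
    (hQ : ∀ g : Y ⟶ G.obj Q, d' ≫ g = 0 → ∃ h : Z ⟶ G.obj Q, d ≫ h = g)
    (g : F.obj Y ⟶ Q) (hg : F.map d' ≫ g = 0) : ∃ h : F.obj Z ⟶ Q, F.map d ≫ h = g := by
  have hg' : d' ≫ adj.homEquiv Y Q g = 0 := by
    rw [← adj.homEquiv_naturality_left, hg, adj.homEquiv_unit, G.map_zero, comp_zero]
  obtain ⟨h, hh⟩ := hQ _ hg'
  exact ⟨(adj.homEquiv Z Q).symm h, by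
    rw [← adj.homEquiv_naturality_left_symm, hh, Equiv.symm_apply_apply]⟩

end Adjunction

section GorensteinProjective

variable {S : Type v} {B : Type w} [Ring S] [Ring B] (H : ModuleCat.{w'} B ⥤ ModuleCat.{v'} S)

theorem range_map_eq_ker_map [H.PreservesZeroMorphisms] [PreservesFiniteLimits H]
    [PreservesFiniteColimits H] {X Y Z : ModuleCat.{w'} B} {d' : X ⟶ Y} {d : Y ⟶ Z}
    (h : LinearMap.range d'.hom = LinearMap.ker d.hom) :
    LinearMap.range (H.map d').hom = LinearMap.ker (H.map d).hom := by
  have w : d' ≫ d = 0 := ModuleCat.hom_ext (LinearMap.range_le_ker_iff.mp h.le)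
  have hexact := (ShortComplex.mk d' d w).moduleCat_exact_iff_range_eq_ker.mpr h
  exact (hexact.map H).moduleCat_range_eq_ker

/-- The comparison isomorphism `H (ker d) ≃ ker (H d)` of a left exact functor `H` between module
categories, for the kernels as submodules rather than as chosen limits; it transports syzygies
along `H`. -/
noncomputable def mapKerLinearEquiv [H.PreservesZeroMorphisms] [PreservesFiniteLimits H]
    {X Y : ModuleCat.{w'} B} (d : X ⟶ Y) :
    H.obj (ModuleCat.of B (LinearMap.ker d.hom)) ≃ₗ[S] LinearMap.ker (H.map d).hom :=
  (H.mapIso (ModuleCat.kernelIsoKer d).symm ≪≫ PreservesKernel.iso H d ≪≫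
    ModuleCat.kernelIsoKer (H.map d)).toLinearEquiv

variable {F : ModuleCat.{u} A ⥤ ModuleCat.{u} R} {G : ModuleCat.{u} R ⥤ ModuleCat.{u} A}

theorem IsGorensteinProjective.map_of_adjunction [PreservesFiniteLimits F]
    [F.PreservesProjectiveObjects] [G.PreservesProjectiveObjects] (adj : F ⊣ G)
    {M : ModuleCat.{u} A} (hM : IsGorensteinProjective A M) :
    IsGorensteinProjective R (F.obj M) := by
  have := adj.isLeftAdjoint
  have := adj.isRightAdjoint
  obtain ⟨P, d, hP, -, hexact, hHom, ⟨e⟩⟩ := hM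
  let δ (i : ℤ) : P (i + 1) ⟶ P i := ModuleCat.ofHom (d i)
  have hFexact (i : ℤ) := range_map_eq_ker_map F (d' := δ (i + 1)) (d := δ i) (hexact i)
  refine ⟨fun i ↦ F.obj (P i), fun i ↦ (F.map (δ i)).hom, fun i ↦ inferInstance,
    fun i ↦ LinearMap.range_le_ker_iff.mp (hFexact i).le, hFexact, fun Q hQ i g hg ↦ ?_,
    ⟨(F.mapIso e.toModuleIso).toLinearEquiv ≪≫ₗ mapKerLinearEquiv F (δ (-1))⟩⟩
  have hGQ : Module.Projective A (G.obj Q) := inferInstance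
  have hP_ext (φ : P (i + 1) ⟶ G.obj Q) (hφ : δ (i + 1) ≫ φ = 0) : ∃ ψ, δ i ≫ ψ = φ := by
    obtain ⟨ψ, hψ⟩ := hHom _ hGQ i φ.hom (congrArg ModuleCat.Hom.hom hφ)
    exact ⟨ModuleCat.ofHom ψ, ModuleCat.hom_ext hψ⟩
  obtain ⟨h, hh⟩ :=
    exists_map_comp_eq_of_adjunction adj hP_ext (ModuleCat.ofHom g) (ModuleCat.hom_ext hg)
  exact ⟨h.hom, congrArg ModuleCat.Hom.hom hh⟩

theorem IsGorensteinProjective.map_of_biadjunction (adj : F ⊣ G) (adj' : G ⊣ F)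
    {M : ModuleCat.{u} A} (hM : IsGorensteinProjective A M) :
    IsGorensteinProjective R (F.obj M) := by
  have := adj.isLeftAdjoint
  have := adj'.isLeftAdjoint
  have := adj'.isRightAdjoint
  have := Functor.preservesProjectiveObjects_of_adjunction_of_preservesEpimorphisms adj
  have := Functor.preservesProjectiveObjects_of_adjunction_of_preservesEpimorphisms adj'
  exact hM.map_of_adjunction adj

end GorensteinProjective

/-- A Frobenius system `(τ, xᵢ, yᵢ)` for a ring homomorphism `f : S →+* B`: an `S`-`S`-bimodule
homomorphism `τ : B → S` with a finite pair of dual bases. Unlike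
`IsFrobeniusExtension`, this is data attached to an arbitrary ring homomorphism, and bilinearity is
spelled out through `f` because `B` carries no `S`-module instances. -/
structure FrobeniusSystem_s1 {S B : Type*} [Ring S] [Ring B] (f : S →+* B) (κ : Type*)
    [Fintype κ] where
  τ : B →+ S
  x : κ → B
  y : κ → B
  map_mul_left (s : S) (b : B) : τ (f s * b) = s * τ b
  map_mul_right (b : B) (s : S) : τ (b * f s) = τ b * s
  sum_mul_map (b : B) : ∑ i, x i * f (τ (y i * b)) = b
  sum_map_mul (b : B) : ∑ i, f (τ (b * x i)) * y i = b

namespace FrobeniusSystem_s1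

variable {S : Type v} {B : Type w} [Ring S] [Ring B] {f : S →+* B} {κ : Type*} [Fintype κ]
  (σ : FrobeniusSystem_s1 f κ)

open ModuleCat

theorem apply_eq_sum {Q : Type*} [AddCommGroup Q] [Module S Q] (φ : B →+ Q)
    (hφ : ∀ s b, φ (f s * b) = s • φ b) (b : B) :
    φ b = ∑ i, σ.τ (b * σ.x i) • φ (σ.y i) := by
  simp_rw [← hφ, ← map_sum, σ.sum_map_mul]

theorem sum_smul_apply_mul {N : Type*} [AddCommGroup N] [Module B N] (φ : B →+ N)
    (hφ : ∀ s b, φ (f s * b) = f s • φ b) (b : B) :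
    ∑ i, σ.x i • φ (σ.y i * b) = b • ∑ i, σ.x i • φ (σ.y i) := by
  let : Module S N := Module.compHom N f
  calc
    ∑ i, σ.x i • φ (σ.y i * b)
      = ∑ i, ∑ j, (σ.x i * f (σ.τ (σ.y i * (b * σ.x j)))) • φ (σ.y j) := by
        refine Finset.sum_congr rfl fun i _ ↦ ?_
        rw [σ.apply_eq_sum φ hφ (σ.y i * b), Finset.smul_sum]
        exact Finset.sum_congr rfl fun j _ ↦ by rw [mul_smul, mul_assoc]; rfl
    _ = ∑ j, (b * σ.x j) • φ (σ.y j) := by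
        rw [Finset.sum_comm]
        simp_rw [← Finset.sum_smul, σ.sum_mul_map]
    _ = b • ∑ i, σ.x i • φ (σ.y i) := by
        simp_rw [Finset.smul_sum, mul_smul]

theorem sum_smul_map_smul {N : Type*} [AddCommGroup N] [Module B N] (n : N) :
    ∑ i, σ.x i • f (σ.τ (σ.y i)) • n = n := by
  simpa only [mul_one, ← mul_smul, ← Finset.sum_smul, one_smul] using
    congrArg (· • n) (σ.sum_mul_map 1)

/-- The map `Q → Hom_S(B, Q)`, `q ↦ (b ↦ τ b • q)`, which is the unit of the adjunction between
coextension and restriction of scalars. -/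
noncomputable def unitApp (Q : ModuleCat S) :
    Q ⟶ (restrictScalars f).obj ((coextendScalars f).obj Q) :=
  ofHom (Y := (restrictScalars f).obj ((coextendScalars f).obj Q))
    { toFun q := (CoextendScalars.equiv f Q).symm
        { toFun b := σ.τ b • q
          map_add' b b' := (congrArg (· • q) (σ.τ.map_add b b')).trans (add_smul _ _ q)
          map_smul' s b := (congrArg (· • q) (σ.map_mul_left s b)).trans (mul_smul s _ q) }
      map_add' q q' := CoextendScalars.ext <| LinearMap.ext fun b ↦ smul_add (σ.τ b) q q'
      map_smul' s q := CoextendScalars.ext <| LinearMap.ext fun b ↦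
        (smul_smul (σ.τ b) s q).trans (congrArg (· • q) (σ.map_mul_right b s).symm) }

/-- The map `Hom_S(B, N) → N`, `φ ↦ ∑ i, x i • φ (y i)`, which is the counit of the adjunction
between coextension and restriction of scalars. -/
noncomputable def counitApp (N : ModuleCat B) :
    (coextendScalars f).obj ((restrictScalars f).obj N) ⟶ N :=
  ofHom
    { toFun φ := ∑ i, σ.x i • (show N from φ (σ.y i))
      map_add' _ _ := (Finset.sum_congr rfl fun i _ ↦ smul_add (σ.x i) _ _).trans
        Finset.sum_add_distrib
      map_smul' b φ :=
        let ψ := CoextendScalars.equiv f _ φ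
        σ.sum_smul_apply_mul (N := N) ψ.toAddMonoidHom ψ.map_smul b }

/-- The adjunction exhibiting coextension of scalars along a ring homomorphism with a Frobenius
system as a left adjoint of restriction of scalars, in addition to the general
`ModuleCat.restrictCoextendScalarsAdj`. -/
noncomputable def coextendRestrictScalarsAdj :
    coextendScalars.{v, w, max w w'} f ⊣ restrictScalars f :=
  Adjunction.mkOfUnitCounit
    { unit :=
        { app := σ.unitApp
          naturality Q Q' g := by
            ext q
            exact CoextendScalars.ext <| LinearMap.ext fun b ↦ (g.hom.map_smul (σ.τ b) q).symm }
      counit :=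
        { app := σ.counitApp
          naturality N N' g := by
            ext φ
            exact ((map_sum g.hom _ _).trans
              (Finset.sum_congr rfl fun i _ ↦ g.hom.map_smul _ _)).symm }
      left_triangle := by
        ext Q φ
        refine CoextendScalars.ext <| LinearMap.ext fun (b : B) ↦ ?_
        let ψ := CoextendScalars.equiv f Q φ
        let eval : (coextendScalars f).obj Q →+ Q :=
          { toFun φ := φ b
            map_zero' := rfl
            map_add' _ _ := rfl }
        exact (map_sum eval _ _).trans
          (σ.apply_eq_sum (Q := Q) ψ.toAddMonoidHom ψ.map_smul b).symm
      right_triangle := by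
        ext N n
        exact σ.sum_smul_map_smul (N := N) n }

end FrobeniusSystem_s1

theorem IsFrobeniusExtension.exists_frobeniusSystem {ι : R →+* A} (h : IsFrobeniusExtension ι) :
    ∃ n : ℕ, Nonempty (FrobeniusSystem_s1 ι (Fin n)) := by
  obtain ⟨-, τ, n, x, y, hleft, hright, hx, hy⟩ := h
  exact ⟨n, ⟨τ, x, y, hleft, hright, hx, hy⟩⟩

theorem stmt1_general {ι : R →+* A} {κ : Type*} [Fintype κ] (σ : FrobeniusSystem_s1 ι κ)
    (M : Type u) [AddCommGroup M] [Module A M]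
    (hM : IsGorensteinProjective A (ModuleCat.of A M)) :
    IsGorensteinProjective R (@ModuleCat.of R _ M _ (Module.compHom M ι)) :=
  hM.map_of_biadjunction (ModuleCat.restrictCoextendScalarsAdj ι) σ.coextendRestrictScalarsAdj

theorem stmt1 (ι : R →+* A) (hF : IsFrobeniusExtension ι)
    (M : Type u) [AddCommGroup M] [Module A M]
    (hM : IsGorensteinProjective A (ModuleCat.of A M)) :
    IsGorensteinProjective R (@ModuleCat.of R _ M _ (Module.compHom M ι)) := by
  obtain ⟨n, ⟨σ⟩⟩ := hF.exists_frobeniusSystem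
  exact stmt1_general σ M hM

end Statement
end
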